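/- For all m ≥ 3 and n ≥ 2, there exist a word w of length m−2 over the two-letter alphabet Σ = {a, b} and a language T over Σ accepted by a DFA with n states, such that the language {x ∈ T | w is a subsequence of x} (i.e., (Σ* ⧢ {w}) ∩ T) is accepted by some DFA with (m−1)·n states and every DFA accepting it has at least (m−1)·n states. -/

import Mathlib

/-!
The witnesses are `w = a ^ k` with `k = m - 2`, and `T`, the words whose number of `b`s is divisible
by `n`. A word contains `a ^ k` as a subsequence exactly when it has at least `k` letters `a`, so the
language in question only depends on `#a` truncated at `k` and on `#b` modulo `n`. These two counters
are independent, since each is driven by its own letter: this gives a DFA with `(k + 1) * n` states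
(`countDFA`), and the words `a ^ i b ^ j` with `i ≤ k`, `j < n` reach pairwise inequivalent states,
being separated by the suffixes `a ^ (k - i) b ^ (n - j)` (`eq_of_eval_eq`).

The letters `a` and `b` are `0` and `1` in `Fin 2`.
-/

open Language

/-- `L` is accepted by some DFA with exactly `k` states. -/
def AcceptedByDFAWith {α : Type} (L : Language α) (k : ℕ) : Prop :=
  ∃ M : DFA α (Fin k), M.accepts = L

/-- The language `{x | a ^ k is a subsequence of x, and n divides the number of letters b}`, expressed
through letter counts. -/
def countLang (k n : ℕ) : Language (Fin 2) :=
  {x : List (Fin 2) | x.count 1 % n = 0 ∧ k ≤ x.count 0}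

theorem mem_countLang {k n : ℕ} {x : List (Fin 2)} :
    x ∈ countLang k n ↔ x.count 1 % n = 0 ∧ k ≤ x.count 0 := Iff.rfl

/-- The DFA counting `a`s up to the ceiling `k` and `b`s modulo `n`. -/
def countDFA (k n : ℕ) (hn : 0 < n) : DFA (Fin 2) (Fin (k + 1) × Fin n) where
  step s c :=
    if c = 0 then (⟨min k (s.1 + 1), by omega⟩, s.2)
    else (s.1, ⟨(s.2 + 1) % n, Nat.mod_lt _ hn⟩)
  start := (0, ⟨0, hn⟩)
  accept := {s | s.2.val = 0 ∧ s.1.val = k}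

theorem countDFA_eval (k n : ℕ) (hn : 0 < n) (x : List (Fin 2)) :
    (countDFA k n hn).eval x =
      (⟨min k (x.count 0), by omega⟩, ⟨x.count 1 % n, Nat.mod_lt _ hn⟩) := by
  induction x using List.reverseRecOn with
  | nil => simp [countDFA]
  | append_singleton x c ih =>
    rw [DFA.eval_append_singleton, ih]
    have hc : c = 0 ∨ c = 1 := by omega
    rcases hc with rfl | rfl
    · simp [countDFA, List.count_append]
      omega
    · simp [countDFA, List.count_append]

theorem countDFA_accepts (k n : ℕ) (hn : 0 < n) :
    (countDFA k n hn).accepts = countLang k n := by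
  ext x
  rw [DFA.mem_accepts, countDFA_eval, mem_countLang]
  simp [countDFA]

/-- Transport along a bijection of the state set with `Fin k`. -/
theorem DFA.acceptedByDFAWith {α σ : Type} {k : ℕ} (M : DFA α σ) (e : σ ≃ Fin k) :
    AcceptedByDFAWith M.accepts k :=
  ⟨DFA.reindex e M, DFA.accepts_reindex M e⟩

theorem count_word (i j i' j' : ℕ) (c : Fin 2) :
    (List.replicate i 0 ++ List.replicate j 1 ++
      (List.replicate i' 0 ++ List.replicate j' 1) : List (Fin 2)).count c =
      if c = 0 then i + i' else j + j' := by
  have hc : c = 0 ∨ c = 1 := by omega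
  rcases hc with rfl | rfl <;> simp [List.count_append, List.count_replicate]

/-- One half of the separation argument: the suffix `a ^ (k - i) b ^ (n - j)` completes
`a ^ i b ^ j` to a word of the language, so it must also complete any word reaching the same
state. -/
theorem le_and_mod_of_eval_eq {σ : Type} {k n : ℕ} (D : DFA (Fin 2) σ)
    (hD : D.accepts = countLang k n) {i i' j j' : ℕ} (hi : i ≤ k) (hj : j < n)
    (h : D.eval (List.replicate i 0 ++ List.replicate j 1) =
      D.eval (List.replicate i' 0 ++ List.replicate j' 1)) :
    i ≤ i' ∧ (j' + (n - j)) % n = 0 := by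
  set z : List (Fin 2) := List.replicate (k - i) 0 ++ List.replicate (n - j) 1 with hz
  have h₁ : List.replicate i 0 ++ List.replicate j 1 ++ z ∈ D.accepts := by
    rw [hD, mem_countLang, count_word, count_word]
    simp only [one_ne_zero, if_true, if_false]
    refine ⟨?_, by omega⟩
    rw [Nat.add_sub_cancel' hj.le, Nat.mod_self]
  have h₂ : List.replicate i' 0 ++ List.replicate j' 1 ++ z ∈ D.accepts := by
    change D.evalFrom D.start _ ∈ D.accept at h₁
    change D.evalFrom D.start _ ∈ D.accept
    rw [DFA.evalFrom_of_append] at h₁ ⊢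
    change D.evalFrom D.start _ = D.evalFrom D.start _ at h
    rwa [← h]
  rw [hD, mem_countLang, count_word, count_word] at h₂
  simp only [one_ne_zero, if_true, if_false] at h₂
  exact ⟨by omega, h₂.1⟩

theorem eq_of_eval_eq {σ : Type} {k n : ℕ} (D : DFA (Fin 2) σ)
    (hD : D.accepts = countLang k n) {i i' j j' : ℕ} (hi : i ≤ k) (hi' : i' ≤ k)
    (hj : j < n) (hj' : j' < n)
    (h : D.eval (List.replicate i 0 ++ List.replicate j 1) =
      D.eval (List.replicate i' 0 ++ List.replicate j' 1)) :
    i = i' ∧ j = j' := by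
  obtain ⟨h₁, h₂⟩ := le_and_mod_of_eval_eq D hD hi hj h
  obtain ⟨h₃, -⟩ := le_and_mod_of_eval_eq D hD hi' hj' h.symm
  refine ⟨le_antisymm h₁ h₃, ?_⟩
  -- `0 < j' + (n - j) < 2 * n`, so divisibility by `n` forces equality with `n`.
  obtain ⟨q, hq⟩ := Nat.dvd_of_mod_eq_zero h₂
  have hq₁ : q = 1 := by
    have : 0 < q := Nat.pos_of_ne_zero (by rintro rfl; omega)
    have : q < 2 := by
      by_contra! hq₂
      have := Nat.mul_le_mul_left n hq₂
      omega
    omega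
  subst hq₁
  omega

theorem le_card_of_accepts_countLang {σ : Type} [Fintype σ] {k n : ℕ} (D : DFA (Fin 2) σ)
    (hD : D.accepts = countLang k n) : (k + 1) * n ≤ Fintype.card σ := by
  let f : Fin (k + 1) × Fin n → σ := fun p =>
    D.eval (List.replicate p.1 0 ++ List.replicate p.2 1)
  have hf : Function.Injective f := by
    rintro ⟨i, j⟩ ⟨i', j'⟩ h
    obtain ⟨h₁, h₂⟩ := eq_of_eval_eq D hD (by omega) (by omega) j.2 j'.2 h
    exact Prod.ext (Fin.ext h₁) (Fin.ext h₂)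
  simpa using Fintype.card_le_of_injective f hf

/-- Tightness of the `(m-1)·n` bound for single-word subsequence matching over a binary
alphabet: the word has length `m - 2` and `{x ∈ T | w is a subsequence of x}` has state
complexity exactly `(m-1)·n`. -/
theorem single_subsequence_tight (m n : ℕ) (hm : 3 ≤ m) (hn : 2 ≤ n) :
    ∃ w : List (Fin 2), w.length = m - 2 ∧
      ∃ T : Language (Fin 2), AcceptedByDFAWith T n ∧
        AcceptedByDFAWith
          ({x : List (Fin 2) | x ∈ T ∧ w.Sublist x} : Language (Fin 2)) ((m - 1) * n) ∧
        ∀ (σ : Type) [Fintype σ] (D : DFA (Fin 2) σ),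
          D.accepts = ({x : List (Fin 2) | x ∈ T ∧ w.Sublist x} : Language (Fin 2)) →
            (m - 1) * n ≤ Fintype.card σ := by
  obtain ⟨k, rfl⟩ : ∃ k, m = k + 2 := ⟨m - 2, by omega⟩
  have hn₀ : 0 < n := by omega
  have hL : ({x : List (Fin 2) | x ∈ countLang 0 n ∧ (List.replicate k 0).Sublist x} :
      Language (Fin 2)) = countLang k n := by
    ext x
    change (x.count 1 % n = 0 ∧ 0 ≤ x.count 0) ∧ (List.replicate k 0).Sublist x ↔
      x.count 1 % n = 0 ∧ k ≤ x.count 0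
    rw [List.replicate_sublist_iff]
    simp
  -- `countLang 0 n` imposes no condition on the `a`s, so it is the language `T`.
  refine ⟨List.replicate k 0, by simp, countLang 0 n, ?_, ?_, ?_⟩
  · rw [← countDFA_accepts 0 n hn₀]
    exact DFA.acceptedByDFAWith _ (finProdFinEquiv.trans (finCongr (by simp)))
  · rw [hL, ← countDFA_accepts k n hn₀]
    exact DFA.acceptedByDFAWith _ finProdFinEquiv
  · intro σ _ D hD
    exact le_card_of_accepts_countLang D (hD.trans hL)
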